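/- For every rooted tree t on a finite type I, the interval consisting of all forests f on I with f ⊑ t, partially ordered by the grafting order ⊑, is a distributive lattice. -/

import Mathlib

/-!
Undoing a grafting cuts an edge that leaves a root.  Hence a forest `f ⊑ t` is obtained from `t` by
cutting the edges entering the vertices of a set `R`, and because only edges leaving a current root
may be cut, `R` (together with the root of `t`) is a lower set of `t`; it is the set of minimal
elements of `f`.  The forest is recovered from `R`: `x ≤ y` in `f` iff `x ≤ y` in `t` and no element
of `R` lies in the half-open interval `(x, y]` of `t` (`cutForest`).

The relation `IsCutOf f g` records this description of `f` in terms of `g`; it is reflexive,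
transitive and implied by a single grafting of a forest, so `GraftLE f t` gives `IsCutOf f t`
(`GraftLE.isCutOf`).  Conversely, if `S ⊆ R` are lower sets containing the root, then
`cutForest R ⊑ cutForest S` (`graftLE_cutForest`), since removing a maximal element from `R`
regrafts a single edge (`singleGraft_cutForest`).  So the interval below `t` is anti-isomorphic to
the lower sets of `t` that contain the root, which are closed under union and intersection.
-/

/-- A forest on `I`: a partial order in which every principal lower set is a chain. -/
def IsForest {I : Type*} (f : PartialOrder I) : Prop :=
  ∀ v : I, IsChain f.le {u : I | f.le u v}

/-- A rooted tree on `I`: a forest with a least element (the root). -/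
def IsRootedTree {I : Type*} (t : PartialOrder I) : Prop :=
  (∃ r : I, ∀ v : I, t.le r v) ∧ IsForest t

/-- `g` is obtained from `f` by a single grafting. -/
def SingleGraft {I : Type*} (f g : PartialOrder I) : Prop :=
  ∃ r r' : I, r ≠ r' ∧ (∀ y, f.le y r → y = r) ∧ (∀ y, f.le y r' → y = r') ∧
    ∀ x y : I, g.le x y ↔ (f.le x y ∨ (x = r ∧ f.le r' y))

/-- The grafting order: reflexive-transitive closure of single grafting. -/
def GraftLE {I : Type*} (f g : PartialOrder I) : Prop :=
  Relation.ReflTransGen SingleGraft f g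

section

variable {I : Type*}

/-- The set of minimal elements (roots) of `f`. -/
def rootSet (f : PartialOrder I) : Set I := {z | ∀ y, f.le y z → y = z}

/-- `f` arises from `g` by cutting the edges entering the minimal elements of `f`, and these form
a lower set of `g`. -/
structure IsCutOf (f g : PartialOrder I) : Prop where
  lower : ∀ z ∈ rootSet f, ∀ w, g.le w z → w ∈ rootSet f
  le_iff : ∀ x y, f.le x y ↔
    g.le x y ∧ ∀ z ∈ rootSet f, g.le x z → g.le z y → z = x

lemma IsCutOf.refl (f : PartialOrder I) : IsCutOf f f where
  lower z hz w hw := by rw [hz w hw]; exact hz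
  le_iff x y := ⟨fun h => ⟨h, fun z hz hxz _ => (hz x hxz).symm⟩, And.left⟩

lemma IsCutOf.rootSet_subset {f g : PartialOrder I} (h : IsCutOf f g) :
    rootSet g ⊆ rootSet f :=
  fun _ hz y hy => hz y ((h.le_iff _ _).1 hy).1

lemma IsCutOf.trans {f g h : PartialOrder I} (fg : IsCutOf f g) (gh : IsCutOf g h) :
    IsCutOf f h where
  lower z hz w hw := by
    by_cases hg : g.le w z
    · exact fg.lower z hz w hg
    · rw [gh.le_iff] at hg
      push Not at hg
      obtain ⟨m, hm, hwm, -, -⟩ := hg hw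
      exact fg.rootSet_subset (gh.lower m hm w hwm)
  le_iff x y := by
    constructor
    · intro hxy
      obtain ⟨gxy, hf⟩ := (fg.le_iff x y).1 hxy
      obtain ⟨hxy', hg⟩ := (gh.le_iff x y).1 gxy
      refine ⟨hxy', fun z hz hxz hzy => ?_⟩
      have gxz : g.le x z :=
        (gh.le_iff x z).2 ⟨hxz, fun w hw h1 h2 => hg w hw h1 (h.le_trans _ _ _ h2 hzy)⟩
      refine hf z hz gxz ((gh.le_iff z y).2 ⟨hzy, fun w hw h1 h2 => ?_⟩)
      -- a root `w` of `g` in `(z, y]` would equal `x`, which forces `w = z` by antisymmetry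
      have hwx := hg w hw (h.le_trans _ _ _ hxz h1) h2
      subst hwx
      exact h.le_antisymm _ _ hxz h1
    · rintro ⟨hxy, hf⟩
      refine (fg.le_iff x y).2 ⟨(gh.le_iff x y).2 ⟨hxy, fun z hz => hf z (fg.rootSet_subset hz)⟩,
        fun z hz h1 h2 => hf z hz ((gh.le_iff _ _).1 h1).1 ((gh.le_iff _ _).1 h2).1⟩

lemma SingleGraft.isForest {f g : PartialOrder I} (hf : IsForest f) (h : SingleGraft f g) :
    IsForest g := by
  obtain ⟨r, r', -, hr, hr', hg⟩ := h
  have key : ∀ v w, f.le r' v → f.le w v → g.le r w := by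
    intro v w h1 h2
    rw [hg]
    rcases eq_or_ne r' w with rfl | hne
    · exact Or.inr ⟨rfl, f.le_refl _⟩
    rcases hf v h1 h2 hne with h | h
    · exact Or.inr ⟨rfl, h⟩
    · exact absurd (hr' w h).symm hne
  intro v a ha b hb hab
  rcases (hg a v).1 ha with h1 | ⟨rfl, h1⟩ <;> rcases (hg b v).1 hb with h2 | ⟨rfl, h2⟩
  · rcases hf v h1 h2 hab with h | h
    · exact Or.inl ((hg _ _).2 (Or.inl h))
    · exact Or.inr ((hg _ _).2 (Or.inl h))
  · exact Or.inr (key v a h2 h1)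
  · exact Or.inl (key v b h1 h2)
  · exact absurd rfl hab

lemma SingleGraft.isCutOf {f g : PartialOrder I} (hf : IsForest f) (h : SingleGraft f g) :
    IsCutOf f g := by
  obtain ⟨r, r', hne, hr, hr', hg⟩ := h
  constructor
  · intro z hz w hw
    rcases (hg w z).1 hw with h | ⟨rfl, -⟩
    · rw [hz w h]; exact hz
    · exact hr
  · intro x y
    constructor
    · intro hxy
      refine ⟨(hg _ _).2 (Or.inl hxy), fun z hz hxz hzy => ?_⟩
      rcases (hg x z).1 hxz with h | ⟨rfl, h⟩
      · exact (hz x h).symm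
      · have hz' := hz _ h
        subst hz'
        rcases (hg _ y).1 hzy with hzy_f | ⟨hzx, -⟩
        -- two distinct roots of the forest `f` would both lie below `y`
        · rcases hf y hxy hzy_f hne with h2 | h2
          · exact absurd (hr' _ h2) hne
          · exact hr _ h2
        · exact hzx
    · rintro ⟨hxy, h⟩
      rcases (hg x y).1 hxy with h' | ⟨rfl, h'⟩
      · exact h'
      · exact absurd (h r' hr' ((hg _ _).2 (Or.inr ⟨rfl, f.le_refl _⟩))
          ((hg _ _).2 (Or.inl h'))).symm hne

lemma GraftLE.isCutOf {f g : PartialOrder I} (hf : IsForest f) (h : GraftLE f g) :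
    IsCutOf f g := by
  suffices IsForest g ∧ IsCutOf f g from this.2
  induction h with
  | refl => exact ⟨hf, .refl f⟩
  | tail _ h ih => exact ⟨h.isForest ih.1, ih.2.trans (h.isCutOf ih.1)⟩

/-- A lower set of `t` containing every minimal element of `t`; for a rooted tree, a lower set
containing the root. -/
def IsCutSet (t : PartialOrder I) (R : Set I) : Prop :=
  rootSet t ⊆ R ∧ ∀ z ∈ R, ∀ w, t.le w z → w ∈ R

lemma IsCutOf.isCutSet {f t : PartialOrder I} (h : IsCutOf f t) : IsCutSet t (rootSet f) :=
  ⟨h.rootSet_subset, h.lower⟩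

/-- The order obtained from the forest `t` by cutting every edge that enters a vertex of `R`:
`x ≤ y` holds iff it holds in `t` and no element of `R` lies in `(x, y]`. -/
@[reducible]
def cutForest (t : PartialOrder I) (ht : IsForest t) (R : Set I) : PartialOrder I where
  le x y := t.le x y ∧ ∀ z ∈ R, t.le x z → t.le z y → z = x
  lt x y := (t.le x y ∧ ∀ z ∈ R, t.le x z → t.le z y → z = x) ∧
    ¬ (t.le y x ∧ ∀ z ∈ R, t.le y z → t.le z x → z = y)
  le_refl x := ⟨t.le_refl x, fun z _ h1 h2 => t.le_antisymm _ _ h2 h1⟩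
  le_trans x y z hxy hyz := by
    refine ⟨t.le_trans _ _ _ hxy.1 hyz.1, fun w hw h1 h2 => ?_⟩
    have hcomp : t.le w y ∨ t.le y w := by
      rcases eq_or_ne w y with rfl | hne
      · exact Or.inl (t.le_refl _)
      · exact ht z h2 hyz.1 hne
    rcases hcomp with h | h
    · exact hxy.2 w hw h1 h
    · obtain rfl := hyz.2 w hw h h2
      exact hxy.2 w hw h1 (t.le_refl _)
  le_antisymm x y hxy hyx := t.le_antisymm _ _ hxy.1 hyx.1
  lt_iff_le_not_ge _ _ := Iff.rfl

lemma IsCutOf.eq_cutForest {f t : PartialOrder I} (ht : IsForest t) (h : IsCutOf f t) :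
    f = cutForest t ht (rootSet f) :=
  PartialOrder.ext fun x y => h.le_iff x y

lemma isForest_cutForest {t : PartialOrder I} (ht : IsForest t) (R : Set I) :
    IsForest (cutForest t ht R) := by
  intro v a ha b hb hab
  rcases ht v ha.1 hb.1 hab with h | h
  · exact Or.inl ⟨h, fun z hz h1 h2 => ha.2 z hz h1 (t.le_trans _ _ _ h2 hb.1)⟩
  · exact Or.inr ⟨h, fun z hz h1 h2 => hb.2 z hz h1 (t.le_trans _ _ _ h2 ha.1)⟩

lemma exists_parent [Finite I] {t : PartialOrder I} (ht : IsForest t) {z : I}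
    (hz : z ∉ rootSet t) :
    ∃ p, t.le p z ∧ p ≠ z ∧ ∀ u, t.le u z → u ≠ z → t.le u p := by
  have hne : {u | t.le u z ∧ u ≠ z}.Nonempty := by
    by_contra hcon
    refine hz fun y hy => ?_
    by_contra hyz
    exact hcon ⟨y, hy, hyz⟩
  obtain ⟨p, hp⟩ := (Set.toFinite {u | t.le u z ∧ u ≠ z}).exists_maximal hne
  refine ⟨p, hp.1.1, hp.1.2, fun u hu huz => ?_⟩
  rcases eq_or_ne u p with rfl | hne'
  · exact t.le_refl _
  rcases ht z hu hp.1.1 hne' with h | h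
  · exact h
  · exact hp.2 ⟨hu, huz⟩ h

lemma rootSet_cutForest [Finite I] {t : PartialOrder I} (ht : IsForest t) {R : Set I}
    (hR : IsCutSet t R) : rootSet (cutForest t ht R) = R := by
  ext z
  constructor
  · intro hz
    by_contra hzR
    -- otherwise the edge from the parent of `z` to `z` is not cut
    obtain ⟨p, hpz, hne, hp⟩ := exists_parent ht fun h => hzR (hR.1 h)
    refine hne (hz p ⟨hpz, fun w hw h1 h2 => ?_⟩)
    exact t.le_antisymm _ _ (hp w h2 (by rintro rfl; exact hzR hw)) h1
  · intro hz y hy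
    exact (hy.2 z hz hy.1 (t.le_refl _)).symm

/-- Regrafting a maximal element `m` of `R` onto its parent in `t`. -/
lemma singleGraft_cutForest [Finite I] {t : PartialOrder I} (ht : IsForest t) {R : Set I}
    (hR : IsCutSet t R) {m : I} (hm : m ∈ R) (hmt : m ∉ rootSet t)
    (hmax : ∀ z ∈ R, t.le m z → z = m) :
    SingleGraft (cutForest t ht R) (cutForest t ht (R \ {m})) := by
  obtain ⟨p, hpm, hne, hp⟩ := exists_parent ht hmt
  have hpR : p ∈ R := hR.2 m hm p hpm
  refine ⟨p, m, hne, fun y hy => (hy.2 p hpR hy.1 (t.le_refl _)).symm,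
    fun y hy => (hy.2 m hm hy.1 (t.le_refl _)).symm, fun x y => ?_⟩
  constructor
  · rintro ⟨hxy, h⟩
    by_cases hx : t.le x m ∧ t.le m y ∧ x ≠ m
    · obtain ⟨hxm, hmy, hxne⟩ := hx
      exact Or.inr ⟨(h p ⟨hpR, hne⟩ (hp x hxm hxne) (t.le_trans _ _ _ hpm hmy)).symm,
        hmy, fun z hz h1 _ => hmax z hz h1⟩
    · refine Or.inl ⟨hxy, fun z hz h1 h2 => ?_⟩
      by_cases hzm : z = m
      · subst hzm
        by_contra hcon
        exact hx ⟨h1, h2, Ne.symm hcon⟩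
      · exact h z ⟨hz, hzm⟩ h1 h2
  · rintro (⟨hxy, h⟩ | ⟨rfl, hmy, -⟩)
    · exact ⟨hxy, fun z hz => h z hz.1⟩
    · refine ⟨t.le_trans _ _ _ hpm hmy, fun z hz h1 h2 => ?_⟩
      rcases ht y h2 hmy hz.2 with h | h
      · exact t.le_antisymm _ _ (hp z h hz.2) h1
      · exact absurd (hmax z hz.1 h) hz.2

lemma graftLE_cutForest [Finite I] {t : PartialOrder I} (ht : IsForest t) {R S : Set I}
    (hR : IsCutSet t R) (hS : IsCutSet t S) (hSR : S ⊆ R) :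
    GraftLE (cutForest t ht R) (cutForest t ht S) := by
  induction hn : (R \ S).ncard generalizing R with
  | zero =>
    have h0 : R \ S = ∅ := (Set.ncard_eq_zero (Set.toFinite _)).1 hn
    rw [Set.Subset.antisymm (Set.sdiff_eq_empty.1 h0) hSR]
    exact Relation.ReflTransGen.refl
  | succ n ih =>
    have hne : (R \ S).Nonempty := by
      rw [← Set.ncard_pos (Set.toFinite _)]; omega
    obtain ⟨m, hm⟩ := (Set.toFinite (R \ S)).exists_maximal hne
    have hmax : ∀ z ∈ R, t.le m z → z = m := fun z hz hmz =>
      t.le_antisymm _ _ (hm.2 ⟨hz, fun hzS => hm.1.2 (hS.2 z hzS m hmz)⟩ hmz) hmz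
    have hR' : IsCutSet t (R \ {m}) := by
      refine ⟨fun z hz => ⟨hR.1 hz, ?_⟩, fun z hz w hw => ⟨hR.2 z hz.1 w hw, ?_⟩⟩
      · rintro rfl
        exact hm.1.2 (hS.1 hz)
      · rintro rfl
        exact hz.2 (hmax z hz.1 hw)
    refine Relation.ReflTransGen.head
      (singleGraft_cutForest ht hR hm.1.1 (fun h => hm.1.2 (hS.1 h)) hmax)
      (ih hR' (fun z hz => ⟨hSR hz, ?_⟩) ?_)
    · rintro rfl
      exact hm.1.2 hz
    · have h1 : (R \ {m}) \ S = (R \ S) \ {m} := by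
        ext z; simp only [Set.mem_sdiff, Set.mem_singleton_iff]; tauto
      rw [h1, Set.ncard_sdiff_singleton_of_mem hm.1, hn]
      rfl

lemma graftLE_iff_rootSet_subset [Finite I] {t f g : PartialOrder I} (ht : IsForest t)
    (hf : IsForest f) (hft : IsCutOf f t) (hgt : IsCutOf g t) :
    GraftLE f g ↔ rootSet g ⊆ rootSet f := by
  refine ⟨fun h => (h.isCutOf hf).rootSet_subset, fun h => ?_⟩
  rw [hft.eq_cutForest ht, hgt.eq_cutForest ht]
  exact graftLE_cutForest ht hft.isCutSet hgt.isCutSet h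

lemma cutForest_graftLE [Finite I] {t : PartialOrder I} (ht : IsForest t) {R : Set I}
    (hR : IsCutSet t R) : GraftLE (cutForest t ht R) t := by
  have h := graftLE_cutForest ht hR (IsCutOf.refl t).isCutSet hR.1
  rwa [← (IsCutOf.refl t).eq_cutForest ht] at h

lemma IsCutSet.union {t : PartialOrder I} {R S : Set I} (hR : IsCutSet t R)
    (hS : IsCutSet t S) : IsCutSet t (R ∪ S) :=
  ⟨fun _ hz => Or.inl (hR.1 hz), fun z hz w hw => hz.imp (hR.2 z · w hw) (hS.2 z · w hw)⟩

lemma IsCutSet.inter {t : PartialOrder I} {R S : Set I} (hR : IsCutSet t R)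
    (hS : IsCutSet t S) : IsCutSet t (R ∩ S) :=
  ⟨fun _ hz => ⟨hR.1 hz, hS.1 hz⟩, fun z hz w hw => ⟨hR.2 z hz.1 w hw, hS.2 z hz.2 w hw⟩⟩

end

/-- For a rooted tree `t`, the interval of forests `f ⊑ t` under the grafting order
is a distributive lattice. -/
theorem interval_distribLattice {I : Type*} [Fintype I]
    (t : PartialOrder I) (ht : IsRootedTree t) :
    ∃ L : DistribLattice {f : PartialOrder I // IsForest f ∧ GraftLE f t},
      ∀ f g : {f : PartialOrder I // IsForest f ∧ GraftLE f t},
        L.toLattice.toSemilatticeSup.toPartialOrder.le f g ↔ GraftLE f.1 g.1 := by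
  have htf := ht.2
  let X := {f : PartialOrder I // IsForest f ∧ GraftLE f t}
  have hcut : ∀ f : X, IsCutOf f.1 t := fun f => f.2.2.isCutOf f.2.1
  have hset : ∀ f : X, IsCutSet t (rootSet f.1) := fun f => (hcut f).isCutSet
  have hle : ∀ f g : X, GraftLE f.1 g.1 ↔ rootSet g.1 ⊆ rootSet f.1 := fun f g =>
    graftLE_iff_rootSet_subset htf f.2.1 (hcut f) (hcut g)
  let mk : ∀ R, IsCutSet t R → X := fun R hR =>
    ⟨cutForest t htf R, isForest_cutForest htf R, cutForest_graftLE htf hR⟩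
  have hmk : ∀ R hR, rootSet (mk R hR).1 = R := fun R hR => rootSet_cutForest htf hR
  -- grafting shrinks the set of roots, so joins are intersections and meets are unions
  let sup : X → X → X := fun f g => mk _ ((hset f).inter (hset g))
  let inf : X → X → X := fun f g => mk _ ((hset f).union (hset g))
  have hsup : ∀ f g, rootSet (sup f g).1 = rootSet f.1 ∩ rootSet g.1 :=
    fun f g => hmk _ ((hset f).inter (hset g))
  have hinf : ∀ f g, rootSet (inf f g).1 = rootSet f.1 ∪ rootSet g.1 :=
    fun f g => hmk _ ((hset f).union (hset g))
  let L : DistribLattice X :=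
    { le := fun f g => GraftLE f.1 g.1
      le_refl := fun f => Relation.ReflTransGen.refl
      le_trans := fun f g h h1 h2 => Relation.ReflTransGen.trans h1 h2
      le_antisymm := fun f g h1 h2 => by
        have h := Set.Subset.antisymm ((hle g f).1 h2) ((hle f g).1 h1)
        apply Subtype.ext
        rw [(hcut f).eq_cutForest htf, (hcut g).eq_cutForest htf, h]
      sup := sup
      inf := inf
      le_sup_left := fun f g => (hle _ _).2 (by rw [hsup]; exact Set.inter_subset_left)
      le_sup_right := fun f g => (hle _ _).2 (by rw [hsup]; exact Set.inter_subset_right)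
      sup_le := fun f g h h1 h2 => (hle _ _).2 (by
        rw [hsup]; exact Set.subset_inter ((hle _ _).1 h1) ((hle _ _).1 h2))
      inf_le_left := fun f g => (hle _ _).2 (by rw [hinf]; exact Set.subset_union_left)
      inf_le_right := fun f g => (hle _ _).2 (by rw [hinf]; exact Set.subset_union_right)
      le_inf := fun f g h h1 h2 => (hle _ _).2 (by
        rw [hinf]; exact Set.union_subset ((hle _ _).1 h1) ((hle _ _).1 h2))
      le_sup_inf := fun f g h => (hle _ _).2 (by
        change rootSet (sup f (inf g h)).1 ⊆ rootSet (inf (sup f g) (sup f h)).1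
        simp only [hsup, hinf]
        rw [Set.inter_union_distrib_left]) }
  exact ⟨L, fun f g => Iff.rfl⟩
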